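/- arXiv:1503.02702 — 5 statements merged into one kernel-verified Lean document; each statement's English description precedes it below -/
import Mathlib

section
/- If the side lengths a, b, c of a nondegenerate triangle are all prime numbers, then the area of the triangle is not a positive integer. Equivalently: there is no positive integer n with 16·n² = (a+b+c)·(−a+b+c)·(a−b+c)·(a+b−c). -/
lemma two_case (b c n : ℤ) (hb : 2 ≤ b) (hn : 0 < n) (hbc : b < 2 + c) (hca : c < 2 + b)
    (h : 16 * n ^ 2 = (2 + b + c) * (-2 + b + c) * (2 - b + c) * (2 + b - c)) : False := by
  have h3 : c = b ∨ c = b + 1 ∨ c = b - 1 := by omega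
  rcases h3 with rfl | rfl | rfl
  · have h1 : n ^ 2 = c ^ 2 - 1 := by linarith
    have h2 : n < c := by nlinarith
    nlinarith
  · have : 2 * (8 * n ^ 2 - 6 * b ^ 2 - 6 * b + 5) = 1 := by linarith
    omega
  · have : 2 * (8 * n ^ 2 - 6 * b ^ 2 + 6 * b + 5) = 1 := by linarith
    omega

theorem triangle_prime_sides_area_not_integer (a b c : ℕ)
    (ha : Nat.Prime a) (hb : Nat.Prime b) (hc : Nat.Prime c)
    (hab : (a : ℤ) < b + c) (hbc : (b : ℤ) < a + c) (hca : (c : ℤ) < a + b) :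
    ¬ ∃ n : ℕ, 0 < n ∧
      16 * (n : ℤ) ^ 2 =
        ((a : ℤ) + b + c) * (-(a : ℤ) + b + c) * ((a : ℤ) - b + c) * ((a : ℤ) + b - c) := by
  rintro ⟨n, hn, h⟩
  have hn' : (0 : ℤ) < n := by exact_mod_cast hn
  have ha2 : (2 : ℤ) ≤ a := by exact_mod_cast ha.two_le
  have hb2 : (2 : ℤ) ≤ b := by exact_mod_cast hb.two_le
  rcases ha.eq_two_or_odd' with rfl | ⟨x, rfl⟩
  · push_cast at *
    exact two_case b c n hb2 hn' (by linarith) (by linarith) (by linarith)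
  rcases hb.eq_two_or_odd' with rfl | ⟨y, rfl⟩
  · push_cast at *
    exact two_case _ c n ha2 hn' (by linarith) (by linarith) (by linarith)
  rcases hc.eq_two_or_odd' with rfl | ⟨z, rfl⟩
  · push_cast at *
    exact two_case _ (2 * y + 1) n ha2 hn' (by linarith) (by linarith) (by linarith)
  have hodd : Odd (16 * (n : ℤ) ^ 2) := by
    rw [h]
    push_cast
    refine ((Odd.mul ?_ ?_).mul ?_).mul ?_
    · exact ⟨x + y + z + 1, by ring⟩
    · exact ⟨-x + y + z, by ring⟩
    · exact ⟨x - y + z, by ring⟩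
    · exact ⟨x + y - z, by ring⟩
  obtain ⟨k, hk⟩ := hodd
  omega
end

section
/- The positive integers equal to the sum of the factorials of their decimal digits are exactly 1, 2, 145 and 40585. That is, for a positive integer n, n equals the sum of d! over the decimal digits d of n if and only if n ∈ {1, 2, 145, 40585}. -/
/-- Pairs (d, d!) for the decimal digits. -/
def digitFacts : List (ℕ × ℕ) :=
  [(0, 1), (1, 1), (2, 2), (3, 6), (4, 24), (5, 120), (6, 720), (7, 5040), (8, 40320), (9, 362880)]

/-- Check of the last digit, for a prefix `v` whose factorial digit sum is `s`. -/
def lastOk (v s : ℕ) : Bool :=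
  let D := Nat.sub (10 * v) s
  bif Nat.ble s (10 * v) then
    bif Nat.ble D 20 then
      digitFacts.all fun p =>
        !(Nat.beq (s + p.2) (10 * v + p.1)) || (Nat.beq (10 * v + p.1) 1 ||
          (Nat.beq (10 * v + p.1) 2 || (Nat.beq (10 * v + p.1) 145 ||
            Nat.beq (10 * v + p.1) 40585)))
    else
      (!(Nat.beq D 115) || (Nat.beq v 14 || Nat.beq v 4058)) && (!(Nat.beq D 714) &&
        (!(Nat.beq D 5033) && (!(Nat.beq D 40312) && !(Nat.beq D 362871))))
  else true

/-- Pruned search over the extensions of the prefix `v` by `k + 1` further digits. -/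
def srch : ℕ → ℕ → ℕ → Bool
  | 0, v, s => lastOk v s
  | k + 1, v, s =>
    Nat.ble (s + (k + 2) * 362880 + 1) (v * 10 ^ (k + 2)) ||
      (Nat.ble ((v + 1) * 10 ^ (k + 2)) s ||
        digitFacts.all fun p => srch k (10 * v + p.1) (s + p.2))

/-- The solution set. -/
def IsSol (n : ℕ) : Prop := n = 1 ∨ n = 2 ∨ n = 145 ∨ n = 40585

theorem lastOk_spec (v s d : ℕ) (hd : d < 10) (h : lastOk v s = true)
    (he : s + d.factorial = 10 * v + d) : IsSol (10 * v + d) := by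
  have hs : s ≤ 10 * v := by
    have := Nat.self_le_factorial d
    omega
  unfold lastOk at h
  simp only [Nat.ble_eq_true_of_le hs, cond_true] at h
  by_cases hD : 10 * v - s ≤ 20
  · have hD' : Nat.ble (Nat.sub (10 * v) s) 20 = true := Nat.ble_eq_true_of_le hD
    rw [hD', cond_true, List.all_eq_true] at h
    have hm : (d, d.factorial) ∈ digitFacts := by
      interval_cases d <;> decide
    have := h _ hm
    simpa [he, IsSol] using this
  · have hD' : Nat.ble (Nat.sub (10 * v) s) 20 = false := by
      rw [← Bool.not_eq_true, Nat.ble_eq]; exact hD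
    rw [hD', cond_false] at h
    have hD2 : Nat.sub (10 * v) s + s = 10 * v := Nat.sub_add_cancel hs
    generalize Nat.sub (10 * v) s = D at h hD2
    simp only [Bool.and_eq_true, Bool.or_eq_true, Bool.not_eq_true', Nat.beq_eq,
      ← Bool.not_eq_true] at h
    unfold IsSol
    interval_cases d <;> simp [Nat.factorial] at he <;> omega

theorem fact_le (d : ℕ) (hd : d < 10) : d.factorial ≤ 362880 :=
  (Nat.factorial_le (Nat.le_of_lt_succ hd)).trans (by decide)

theorem sum_le (w : List ℕ) (hw : ∀ d ∈ w, d < 10) :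
    (w.map Nat.factorial).sum ≤ w.length * 362880 := by
  induction w with
  | nil => simp
  | cons a t ih =>
    have h1 := ih (fun d hd => hw d (by simp [hd]))
    have h2 := fact_le a (hw a (by simp))
    simp only [List.map_cons, List.sum_cons, List.length_cons]
    omega

theorem foldl_bounds (w : List ℕ) (hw : ∀ d ∈ w, d < 10) (v : ℕ) :
    v * 10 ^ w.length ≤ w.foldl (fun a d => 10 * a + d) v ∧
      w.foldl (fun a d => 10 * a + d) v < (v + 1) * 10 ^ w.length := by
  induction w generalizing v with
  | nil => simp
  | cons a t ih =>
    have h1 := ih (fun d hd => hw d (by simp [hd])) (10 * v + a)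
    have h2 := hw a (by simp)
    simp only [List.foldl_cons, List.length_cons, pow_succ]
    constructor
    · refine le_trans ?_ h1.1
      calc v * (10 ^ t.length * 10) = (10 * v) * 10 ^ t.length := by ring
        _ ≤ _ := Nat.mul_le_mul_right _ (by omega)
    · refine lt_of_lt_of_le h1.2 ?_
      calc (10 * v + a + 1) * 10 ^ t.length ≤ (10 * (v + 1)) * 10 ^ t.length :=
            Nat.mul_le_mul_right _ (by omega)
        _ = _ := by ring

theorem srch_spec (k v s : ℕ) (h : srch k v s = true) (w : List ℕ) (hl : w.length = k + 1)
    (hw : ∀ d ∈ w, d < 10)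
    (he : s + (w.map Nat.factorial).sum = w.foldl (fun a d => 10 * a + d) v) :
    IsSol (w.foldl (fun a d => 10 * a + d) v) := by
  induction k generalizing v s w with
  | zero =>
    obtain ⟨d, rfl⟩ := List.length_eq_one_iff.1 hl
    simp only [List.map_cons, List.map_nil, List.sum_cons, List.sum_nil, List.foldl_cons,
      List.foldl_nil, add_zero] at he ⊢
    exact lastOk_spec v s d (hw d (by simp)) h he
  | succ k ih =>
    have hb := foldl_bounds w hw v
    have hs := sum_le w hw
    rw [hl, show k + 1 + 1 = k + 2 from rfl] at hb hs
    unfold srch at h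
    rw [Bool.or_eq_true, Bool.or_eq_true, Nat.ble_eq, Nat.ble_eq, List.all_eq_true] at h
    rcases h with h | h | h
    · exfalso
      have := hb.1
      omega
    · exfalso
      have := hb.2
      omega
    · cases w with
      | nil => simp at hl
      | cons a t =>
        have ha := hw a (by simp)
        have hm : (a, a.factorial) ∈ digitFacts := by
          interval_cases a <;> decide
        refine ih _ _ (h _ hm) t (by simpa using hl) (fun d hd => hw d (by simp [hd])) ?_
        simp only [List.map_cons, List.sum_cons, List.foldl_cons] at he
        rw [← he, add_assoc]

theorem srch0 : srch 0 0 0 = true := by decide +kernel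

/-- The search over all nonzero leading digits, followed by `k + 1` digits. -/
def startOk (k : ℕ) : Bool := digitFacts.tail.all fun p => srch k p.1 p.2

theorem start0 : startOk 0 = true := by decide +kernel
theorem start1 : startOk 1 = true := by decide +kernel
theorem start2 : startOk 2 = true := by decide +kernel
theorem start3 : startOk 3 = true := by decide +kernel
theorem start4 : startOk 4 = true := by decide +kernel
theorem start5 : startOk 5 = true := by decide +kernel

theorem start_spec (k : ℕ) (h : startOk k = true) (a : ℕ) (t : List ℕ) (ha : a ≠ 0)
    (hl : t.length = k + 1) (hw : ∀ d ∈ a :: t, d < 10)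
    (he : ((a :: t).map Nat.factorial).sum = (a :: t).foldl (fun a d => 10 * a + d) 0) :
    IsSol ((a :: t).foldl (fun a d => 10 * a + d) 0) := by
  have ha' := hw a (by simp)
  have hm : (a, a.factorial) ∈ digitFacts.tail := by
    interval_cases a <;> first | exact absurd rfl ha | decide
  unfold startOk at h
  rw [List.all_eq_true] at h
  simp only [List.map_cons, List.sum_cons, List.foldl_cons, mul_zero, zero_add] at he ⊢
  exact srch_spec k a _ (h _ hm) t hl (fun d hd => hw d (by simp [hd])) he

theorem pow_big (m : ℕ) : (m + 8) * 362880 < 10 ^ (m + 7) := by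
  induction m with
  | zero => norm_num
  | succ m ih =>
    rw [show m + 1 + 7 = (m + 7) + 1 from rfl, pow_succ]
    generalize 10 ^ (m + 7) = x at ih ⊢
    linarith

theorem sum_factorial_digits_eq_self_iff (n : ℕ) (hn : 0 < n) :
    n = ((Nat.digits 10 n).map Nat.factorial).sum ↔
      n = 1 ∨ n = 2 ∨ n = 145 ∨ n = 40585 := by
  constructor
  · intro h
    have hw : ∀ d ∈ Nat.digits 10 n, d < 10 := fun d hd => Nat.digits_lt_base (by norm_num) hd
    have hle := sum_le _ hw
    rw [← h] at hle
    have hf : (Nat.digits 10 n).reverse.foldl (fun a d => 10 * a + d) 0 = n := by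
      rw [List.foldl_reverse]
      conv_rhs => rw [← Nat.ofDigits_digits 10 n, Nat.ofDigits_eq_foldr]
      congr 1
      funext x y
      simp [add_comm]
    have hne : (Nat.digits 10 n).length ≠ 0 := by
      intro h0
      rw [h0] at hle
      omega
    have hlen : (Nat.digits 10 n).length ≤ 7 := by
      by_contra hc
      obtain ⟨m, hm⟩ : ∃ m, (Nat.digits 10 n).length = m + 8 :=
        ⟨(Nat.digits 10 n).length - 8, by omega⟩
      have h1 := pow_big m
      have h2 := Nat.base_pow_length_digits_le 10 n (by norm_num) hn.ne'
      rw [hm] at hle h2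
      have : 10 ^ (m + 8) = 10 * 10 ^ (m + 7) := by ring
      omega
    obtain ⟨k, hk⟩ := Nat.exists_eq_succ_of_ne_zero hne
    have hw' : ∀ d ∈ (Nat.digits 10 n).reverse, d < 10 := fun d hd => hw d (by simpa using hd)
    have he' : ((Nat.digits 10 n).reverse.map Nat.factorial).sum =
        (Nat.digits 10 n).reverse.foldl (fun a d => 10 * a + d) 0 := by
      rw [hf, List.map_reverse, List.sum_reverse, ← h]
    have hk' : (Nat.digits 10 n).reverse.length = k + 1 := by simpa using hk
    have hlast : ∀ a t, (Nat.digits 10 n).reverse = a :: t → a ≠ 0 := by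
      intro a t hat
      have hD : Nat.digits 10 n = t.reverse ++ [a] := by
        rw [← List.reverse_reverse (Nat.digits 10 n), hat, List.reverse_cons]
      have := Nat.getLast_digit_ne_zero 10 hn.ne'
      simpa [hD] using this
    have this : IsSol ((Nat.digits 10 n).reverse.foldl (fun a d => 10 * a + d) 0) := by
      rcases k with _ | k
      · exact srch_spec 0 0 0 srch0 _ hk' hw' (by rw [zero_add, he'])
      · have hsr : startOk k = true := by
          have : k < 6 := by omega
          interval_cases k
          · exact start0
          · exact start1
          · exact start2
          · exact start3
          · exact start4
          · exact start5
        generalize (Nat.digits 10 n).reverse = w at *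
        cases w with
        | nil => simp at hk'
        | cons a t =>
          exact start_spec k hsr a t (hlast a t rfl) (by simpa using hk') hw' he'
    rwa [hf] at this
  · rintro (rfl | rfl | rfl | rfl) <;> simp [Nat.factorial]
end

section
/- The fractional part of (√5 + 2)^1000 is greater than 1 − 10^(−100); consequently the first 100 digits after the decimal point of (√5 + 2)^1000 are all equal to 9, and in particular the 100th digit after the decimal point is 9. -/
theorem aux_conj (n : ℕ) : ∃ a b : ℤ, (Real.sqrt 5 + 2) ^ n = a + b * Real.sqrt 5 ∧
    (2 - Real.sqrt 5) ^ n = a - b * Real.sqrt 5 := by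
  have h5 : Real.sqrt 5 * Real.sqrt 5 = 5 := Real.mul_self_sqrt (by norm_num)
  induction n with
  | zero => exact ⟨1, 0, by simp, by simp⟩
  | succ n ih =>
    obtain ⟨a, b, h1, h2⟩ := ih
    refine ⟨2 * a + 5 * b, a + 2 * b, ?_, ?_⟩
    · rw [pow_succ, h1]; push_cast; linear_combination (b : ℝ) * h5
    · rw [pow_succ, h2]; push_cast; linear_combination (b : ℝ) * h5

theorem aux_int (n : ℕ) (hn : Even n) : ∃ N : ℤ,
    (Real.sqrt 5 + 2) ^ n = N - (Real.sqrt 5 - 2) ^ n := by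
  obtain ⟨a, b, h1, h2⟩ := aux_conj n
  refine ⟨2 * a, ?_⟩
  rw [← hn.neg_pow (Real.sqrt 5 - 2), neg_sub, h1, h2]
  push_cast; ring

theorem aux_small (n : ℕ) : 0 < (Real.sqrt 5 - 2) ^ n ∧
    (Real.sqrt 5 - 2) ^ n ≤ (1 / 4 : ℝ) ^ n := by
  have l : 2 < Real.sqrt 5 := Real.lt_sqrt_of_sq_lt (by norm_num)
  have u : Real.sqrt 5 ≤ 9 / 4 := Real.sqrt_le_iff.2 ⟨by norm_num, by norm_num⟩
  exact ⟨pow_pos (by linarith) n, pow_le_pow_left₀ (by linarith) (by linarith) n⟩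

theorem aux_main (x e : ℝ) (N : ℤ) (hx : x = N - e) (h0 : 0 < e)
    (h1 : e < ((10 : ℝ) ^ 100)⁻¹) :
    Int.fract x > 1 - (10 : ℝ) ^ (-100 : ℤ) ∧
    (∀ k : ℕ, 1 ≤ k → k ≤ 100 → ⌊(10 : ℝ) ^ k * x⌋ % 10 = 9) := by
  have key : ∀ k : ℕ, k ≤ 100 → ⌊(10 : ℝ) ^ k * x⌋ = 10 ^ k * N - 1 := by
    intro k hk
    have hp : (10 : ℝ) ^ k ≤ 10 ^ 100 := pow_le_pow_right₀ (by norm_num) hk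
    have hk0 : (0 : ℝ) < 10 ^ k := by positivity
    have h2 : (10 : ℝ) ^ k * e < 1 := by
      calc (10 : ℝ) ^ k * e ≤ 10 ^ 100 * e := by gcongr
        _ < 10 ^ 100 * ((10 : ℝ) ^ 100)⁻¹ := by gcongr
        _ = 1 := mul_inv_cancel₀ (by positivity)
    have h3 : 0 < (10 : ℝ) ^ k * e := by positivity
    rw [Int.floor_eq_iff]
    push_cast
    rw [hx, mul_sub]
    constructor <;> linarith
  constructor
  · have h := key 0 (by norm_num)
    simp only [pow_zero, one_mul] at h
    have hz : (10 : ℝ) ^ (-100 : ℤ) = ((10 : ℝ) ^ 100)⁻¹ := by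
      rw [zpow_neg]; norm_cast
    rw [Int.fract, h, hz, hx]
    push_cast
    linarith
  · intro k hk hk'
    rw [key k hk']
    obtain ⟨j, rfl⟩ := Nat.exists_eq_add_of_le hk
    rw [pow_add, pow_one, mul_assoc]
    omega

theorem sqrt_five_power_fract_and_digits :
    Int.fract ((Real.sqrt 5 + 2) ^ 1000) > 1 - (10 : ℝ) ^ (-100 : ℤ) ∧
    (∀ k : ℕ, 1 ≤ k → k ≤ 100 →
      ⌊(10 : ℝ) ^ k * (Real.sqrt 5 + 2) ^ 1000⌋ % 10 = 9) ∧
    ⌊(10 : ℝ) ^ 100 * (Real.sqrt 5 + 2) ^ 1000⌋ % 10 = 9 := by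
  obtain ⟨N, hN⟩ := aux_int 1000 (by decide)
  obtain ⟨h0, h1⟩ := aux_small 1000
  have h2 : (1 / 4 : ℝ) ^ 1000 < ((10 : ℝ) ^ 100)⁻¹ := by
    have a : (1 / 4 : ℝ) ^ 1000 = ((1 / 4 : ℝ) ^ 10) ^ 100 := by rw [← pow_mul]
    rw [a, ← inv_pow]
    exact pow_lt_pow_left₀ (by norm_num) (by norm_num) (by norm_num)
  obtain ⟨A, B⟩ := aux_main _ _ N hN h0 (lt_of_le_of_lt h1 h2)
  exact ⟨A, B, B 100 (by norm_num) le_rfl⟩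
end

section
/- Suppose a family of closed unit disks covers the plane: there is a set S ⊆ ℝ² of centers such that every point of ℝ² lies in the closed disk of radius 1 around some point of S. Then some point of the plane is covered at least three times: there exist a point p ∈ ℝ² and three pairwise distinct centers c₁, c₂, c₃ ∈ S such that the distance from p to each cᵢ is at most 1. -/
theorem plane_unit_disk_cover_triple_point (S : Set (EuclideanSpace ℝ (Fin 2)))
    (hcover : ∀ p : EuclideanSpace ℝ (Fin 2), ∃ c ∈ S, dist p c ≤ 1) :
    ∃ (p : EuclideanSpace ℝ (Fin 2)) (c₁ c₂ c₃ : EuclideanSpace ℝ (Fin 2)),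
      c₁ ∈ S ∧ c₂ ∈ S ∧ c₃ ∈ S ∧ c₁ ≠ c₂ ∧ c₁ ≠ c₃ ∧ c₂ ≠ c₃ ∧
      dist p c₁ ≤ 1 ∧ dist p c₂ ≤ 1 ∧ dist p c₃ ≤ 1 := by
  by_contra hno
  have key : ∀ p c₁ c₂ c₃ : EuclideanSpace ℝ (Fin 2), c₁ ∈ S → c₂ ∈ S → c₃ ∈ S →
      c₁ ≠ c₂ → c₁ ≠ c₃ → c₂ ≠ c₃ →
      dist p c₁ ≤ 1 → dist p c₂ ≤ 1 → dist p c₃ ≤ 1 → False :=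
    fun p c₁ c₂ c₃ h1 h2 h3 h4 h5 h6 h7 h8 h9 =>
      hno ⟨p, c₁, c₂, c₃, h1, h2, h3, h4, h5, h6, h7, h8, h9⟩
  -- each point lies in finitely many disks
  have hloc : ∀ p : EuclideanSpace ℝ (Fin 2), (S ∩ Metric.closedBall p 1).Finite := by
    intro p
    by_contra hinf
    obtain ⟨t, ht, hcard⟩ := Set.Infinite.exists_subset_card_eq hinf 3
    obtain ⟨x, y, z, hxy, hxz, hyz, rfl⟩ := Finset.card_eq_three.mp hcard
    have hx := ht (show x ∈ _ by simp)
    have hy := ht (show y ∈ _ by simp)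
    have hz := ht (show z ∈ _ by simp)
    exact key p x y z hx.1 hy.1 hz.1 hxy hxz hyz (by simpa [dist_comm] using hx.2)
      (by simpa [dist_comm] using hy.2) (by simpa [dist_comm] using hz.2)
  obtain ⟨c, hcS, -⟩ := hcover 0
  -- finitely many centers near `c`
  have hfin : (S ∩ Metric.closedBall c 3).Finite := by
    obtain ⟨t, -, htfin, ht⟩ := Metric.totallyBounded_iff.mp
      (isCompact_closedBall c 3).totallyBounded 1 one_pos |>.imp fun t h => 
        (⟨trivial, h.1, h.2⟩ : True ∧ _ ∧ _)
    refine (htfin.biUnion fun p _ => hloc p).subset ?_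
    rintro x ⟨hxS, hx⟩
    obtain ⟨p, hp, hxp⟩ := Set.mem_iUnion₂.mp (ht hx)
    exact Set.mem_iUnion₂.mpr ⟨p, hp, hxS, Metric.ball_subset_closedBall hxp⟩
  set F : Set (EuclideanSpace ℝ (Fin 2)) := (S ∩ Metric.closedBall c 3) \ {c} with hF
  have hFfin : F.Finite := hfin.subset Set.diff_subset
  have hclosed : ∀ G : Set (EuclideanSpace ℝ (Fin 2)), G ⊆ F →
      IsClosed (⋃ x ∈ G, Metric.closedBall x 1) := fun G hG =>
    (hFfin.subset hG).isClosed_biUnion fun x _ => Metric.isClosed_closedBall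
  have hsph : Metric.sphere c 1 ⊆ ⋃ x ∈ F, Metric.closedBall x 1 := by
    intro p hp
    have hp1 : ‖p - c‖ = 1 := by simpa [dist_eq_norm] using hp
    have hcont : Filter.Tendsto (fun t : ℝ => c + t • (p - c)) (nhdsWithin 1 (Set.Ioi 1))
        (nhds p) := by
      have : Continuous (fun t : ℝ => c + t • (p - c)) := by fun_prop
      have h := (this.tendsto 1).mono_left (nhdsWithin_le_nhds (s := Set.Ioi 1))
      simpa using h
    refine (hclosed F subset_rfl).mem_of_tendsto hcont ?_
    filter_upwards [Ioo_mem_nhdsGT (show (1:ℝ) < 2 by norm_num)] with t ht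
    obtain ⟨x, hxS, hx⟩ := hcover (c + t • (p - c))
    have hd : dist (c + t • (p - c)) c = t := by
      rw [dist_eq_norm, add_sub_cancel_left, norm_smul, hp1, mul_one, Real.norm_eq_abs,
        abs_of_pos (by linarith [ht.1])]
    refine Set.mem_iUnion₂.mpr ⟨x, ⟨⟨hxS, ?_⟩, ?_⟩, hx⟩
    · rw [Metric.mem_closedBall]
      have := dist_triangle_left x c (c + t • (p - c))
      linarith [ht.2]
    · rintro rfl
      rw [hd] at hx
      linarith [ht.1]
  have hrank : 1 < Module.rank ℝ (EuclideanSpace ℝ (Fin 2)) := by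
    rw [← Module.finrank_eq_rank, finrank_euclideanSpace_fin]
    norm_num
  have hconn := isPreconnected_sphere hrank c 1
  obtain ⟨p, hp⟩ := NormedSpace.sphere_nonempty (x := c) (r := 1) |>.mpr zero_le_one
  obtain ⟨a, haF, hpa⟩ := Set.mem_iUnion₂.mp (hsph hp)
  have hac : a ≠ c := haF.2
  have hn : ‖c - a‖ ≠ 0 := norm_ne_zero_iff.mpr (sub_ne_zero.mpr hac.symm)
  have hnpos : 0 < ‖c - a‖ := norm_pos_iff.mpr (sub_ne_zero.mpr hac.symm)
  -- the antipodal point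
  set q := c + (‖c - a‖⁻¹) • (c - a) with hq
  have hqs : q ∈ Metric.sphere c 1 := by
    rw [mem_sphere_iff_norm, hq, add_sub_cancel_left, norm_smul, norm_inv, norm_norm,
      inv_mul_cancel₀ hn]
  have hqa : ¬ dist q a ≤ 1 := by
    have : q - a = (1 + ‖c - a‖⁻¹) • (c - a) := by rw [hq]; module
    rw [dist_eq_norm, this, norm_smul, Real.norm_of_nonneg (by positivity), add_mul,
      inv_mul_cancel₀ hn]
    linarith
  have hsub : Metric.sphere c 1 ⊆ Metric.closedBall a 1 ∪
      ⋃ x ∈ F \ {a}, Metric.closedBall x 1 := by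
    intro y hy
    obtain ⟨x, hx, hyx⟩ := Set.mem_iUnion₂.mp (hsph hy)
    by_cases h : x = a
    · left; rwa [← h]
    · right; exact Set.mem_iUnion₂.mpr ⟨x, ⟨hx, h⟩, hyx⟩
  obtain ⟨y, hy, hya, hyb⟩ := isPreconnected_closed_iff.mp hconn _ _ Metric.isClosed_closedBall
    (hclosed _ Set.diff_subset) hsub ⟨p, hp, hpa⟩
    ⟨q, hqs, (hsub hqs).resolve_left hqa⟩
  obtain ⟨b, hb, hyb⟩ := Set.mem_iUnion₂.mp hyb
  exact key y c a b hcS haF.1.1 hb.1.1.1 hac.symm (Ne.symm hb.1.2) (Ne.symm hb.2)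
    (le_of_eq hy) hya hyb
end

section
/- Let D be the closed unit disk in ℝ² with center O. Suppose D = A ∪ B where A and B are closed sets whose interiors are disjoint, and suppose there exists an isometry g of the plane ℝ² with g(A) = B (so the two parts are congruent). Then the center O belongs to both parts: O ∈ A ∩ B. -/
/-- In the plane, some unit vector is orthogonal to `p` and makes a non-acute angle with `q`. -/
lemma exists_unit_aux (p q : EuclideanSpace ℝ (Fin 2)) (hp : p ≠ 0) :
    ∃ x : EuclideanSpace ℝ (Fin 2), ‖x‖ = 1 ∧ inner ℝ x p = 0 ∧ inner ℝ x q ≤ 0 := by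
  obtain ⟨x, hx, hxp⟩ : ∃ x : EuclideanSpace ℝ (Fin 2), ‖x‖ = 1 ∧ inner ℝ x p = 0 := by
    let y : EuclideanSpace ℝ (Fin 2) := !₂[-p 1, p 0]
    have hy : y ≠ 0 := by
      intro h
      apply hp
      have h0 : y 0 = 0 := by rw [h]; rfl
      have h1 : y 1 = 0 := by rw [h]; rfl
      simp [y] at h0 h1
      ext i
      fin_cases i
      · simpa using h1
      · simpa using h0
    have hyp : inner ℝ y p = 0 := by
      simp [y, PiLp.inner_apply, Fin.sum_univ_two]
      ring
    refine ⟨(‖y‖⁻¹ : ℝ) • y, ?_, ?_⟩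
    · rw [norm_smul, norm_inv, norm_norm, inv_mul_cancel₀ (norm_ne_zero_iff.mpr hy)]
    · rw [real_inner_smul_left, hyp, mul_zero]
  rcases le_total (inner ℝ x q) 0 with h | h
  · exact ⟨x, hx, hxp, h⟩
  · exact ⟨-x, by simpa using hx, by simp [hxp], by simpa using h⟩

/-- A unit vector making a non-acute angle with `p ≠ 0` has distance more than `1` from `p`. -/
lemma one_lt_norm_sub_aux (x p : EuclideanSpace ℝ (Fin 2)) (hx : ‖x‖ = 1) (hp : p ≠ 0)
    (h : inner ℝ x p ≤ 0) : 1 < ‖x - p‖ := by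
  have h1 := norm_sub_sq_real x p
  have h2 : 0 < ‖p‖ := norm_pos_iff.mpr hp
  rw [hx] at h1
  nlinarith [norm_nonneg (x - p)]

theorem broken_line_halving_disk_passes_through_center
    (O : EuclideanSpace ℝ (Fin 2)) (A B : Set (EuclideanSpace ℝ (Fin 2)))
    (hA : IsClosed A) (hB : IsClosed B)
    (hunion : A ∪ B = Metric.closedBall O 1)
    (hint : interior A ∩ interior B = ∅)
    (g : EuclideanSpace ℝ (Fin 2) ≃ᵢ EuclideanSpace ℝ (Fin 2))
    (hg : g '' A = B) :
    O ∈ A ∩ B := by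
  have hmem : ∀ x, x ∈ A ↔ g x ∈ B := by
    intro x
    rw [← hg, g.injective.mem_set_image]
  have hAD : ∀ x ∈ A, dist x O ≤ 1 := fun x hx =>
    Metric.mem_closedBall.mp (hunion ▸ Or.inl hx)
  have hBD : ∀ x ∈ B, dist x O ≤ 1 := fun x hx =>
    Metric.mem_closedBall.mp (hunion ▸ Or.inr hx)
  have hO : O ∈ A ∪ B := by rw [hunion]; simp
  by_cases hfix : g O = O
  · have := hmem O
    rw [hfix] at this
    rcases hO with h | h
    · exact ⟨h, this.mp h⟩
    · exact ⟨this.mpr h, h⟩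
  exfalso
  have hfix' : g.symm O ≠ O := by
    intro h
    apply hfix
    conv_lhs => rw [← h]
    simp
  obtain ⟨x, hx, hxp, hxq⟩ :=
    exists_unit_aux (g O - O) (g.symm O - O) (sub_ne_zero.mpr hfix)
  have hP := one_lt_norm_sub_aux x _ hx (sub_ne_zero.mpr hfix) hxp.le
  have hQ := one_lt_norm_sub_aux x _ hx (sub_ne_zero.mpr hfix') hxq
  have hxD : O + x ∈ A ∪ B := by
    rw [hunion]; simp [hx]
  rcases hxD with h | h
  · have h1 := hBD _ ((hmem _).mp h)
    have h2 : dist (g (O + x)) O = dist (O + x) (g.symm O) := by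
      rw [← g.dist_eq (O + x) (g.symm O), g.apply_symm_apply]
    rw [h2, dist_eq_norm, show O + x - g.symm O = x - (g.symm O - O) by abel] at h1
    linarith
  · have h0 : g.symm (O + x) ∈ A := by rw [hmem]; simpa using h
    have h1 := hAD _ h0
    rw [← g.dist_eq, g.apply_symm_apply, dist_eq_norm,
      show O + x - g O = x - (g O - O) by abel] at h1
    linarith
end
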